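/- There exist absolute constants c > 0 and α ≥ 0 such that for every finite A ⊆ F_p with |A| ≥ p^{1/2} and |A| ≥ 2, one has max{|A+A|, |AA|} ≥ c(log|A|)^{−α} · min{ |A|^{13/12}(|A|/p^{1/2})^{1/12}, |A|(p/|A|)^{1/11} }. -/

import Mathlib

open Finset Pointwise

/-!
Following Katz–Shen, Garaev and Bourgain–Garaev, write `n = #A` and let `x ∈ A` maximise
`∑ y ∈ A, #(x • A ∩ y • A)`. By Cauchy–Schwarz and dyadic pigeonholing there is a level `N` such
that the set `Y` of those `y` with `N ≤ #(x • A ∩ y • A)` satisfies `n ^ 3 ≲ #(A * A) * N * #Y`.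
Each dilate `± y • A` with `y ∈ Y` is covered by about `#(A + A) / N` translates of `x • A`, so
Plünnecke's inequality bounds `a • Y - b • Y + c • Y - d • Y`, and hence `Y + ξ • Y` for every
`ξ ∈ (Y - Y) / (Y - Y)`, with `a, b, c, d ∈ Y`. In a prime field one such `ξ` makes `Y + ξ • Y`
large: if the quotient set is everything, average the additive energy of `Y` and `ξ • Y`; otherwise
walk from `0` by steps of `1` until leaving the quotient set, and use that `Y + (ξ + 1) • Y` has
`#Y ^ 2` elements when `ξ + 1` lies outside.
-/

lemma exists_nonempty_subset_ratio_min {α : Type*} {X : Finset α} (hX : X.Nonempty)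
    {f : Finset α → ℝ} (hf : 0 ≤ f ∅) :
    ∃ Z ⊆ X, Z.Nonempty ∧ ∀ Z' ⊆ X, f Z * #Z' ≤ f Z' * #Z := by
  classical
  obtain ⟨Z, hZ, hmin⟩ := exists_min_image (X.powerset.erase ∅) (fun Z ↦ f Z / #Z)
    ⟨X, mem_erase_of_ne_of_mem hX.ne_empty (mem_powerset_self _)⟩
  rw [mem_erase, mem_powerset, ← nonempty_iff_ne_empty] at hZ
  refine ⟨Z, hZ.2, hZ.1, fun Z' hZ' ↦ ?_⟩
  obtain rfl | hne := Z'.eq_empty_or_nonempty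
  · simpa using mul_nonneg hf (Nat.cast_nonneg #Z)
  · rw [← div_le_div_iff₀ (mod_cast hZ.1.card_pos) (mod_cast hne.card_pos)]
    exact hmin Z' (mem_erase_of_ne_of_mem hne.ne_empty (mem_powerset.2 hZ'))

section Sumsets

variable {G ι : Type*} [AddCommGroup G] [DecidableEq G]

lemma exists_subset_card_add_insert (X C : Finset G) (x : G) :
    ∃ D ⊆ X, #(X + insert x C) + #D = #(X + C) + #X ∧
      ∀ B : Finset G, #(X + B + insert x C) + #(D + B) ≤ #(X + B + C) + #(X + B) := by
  set D := {a ∈ X | a + x ∈ X + C}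
  have hD : D + {x} = (X + {x}) ∩ (X + C) := by
    ext y
    simp only [mem_add, mem_singleton, mem_inter, D, mem_filter]
    grind
  have card_insert_add (Y : Finset G) :
      #(Y + insert x C) + #((Y + {x}) ∩ (Y + C)) = #(Y + C) + #Y := by
    rw [insert_eq, add_union, card_union_add_card_inter, card_add_singleton, add_comm]
  refine ⟨D, filter_subset _ _, ?_, fun B ↦ ?_⟩
  · rw [← card_add_singleton D x, hD, card_insert_add]
  · have hDB : D + B + {x} ⊆ (X + B + {x}) ∩ (X + B + C) := by
      rw [add_right_comm, hD, add_right_comm X B, add_right_comm X B]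
      exact inter_add_subset
    rw [← card_insert_add, ← card_add_singleton (D + B) x]
    gcongr

lemma sum_card_add_add_mul_le {s : Finset ι} {w : ι → ℝ} {B : ι → Finset G} {X : Finset G}
    (hw : ∀ i ∈ s, 0 ≤ w i)
    (hX : ∀ X' ⊆ X, (∑ i ∈ s, w i * #(X + B i)) * #X' ≤ (∑ i ∈ s, w i * #(X' + B i)) * #X)
    (C : Finset G) :
    (∑ i ∈ s, w i * #(X + B i + C)) * #X ≤ (∑ i ∈ s, w i * #(X + B i)) * #(X + C) := by
  induction C using Finset.induction_on with
  | empty => simp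
  | insert x C _ ih =>
    obtain ⟨D, hDX, hD, hB⟩ := exists_subset_card_add_insert X C x
    have hD' : (#(X + insert x C) : ℝ) = #(X + C) + #X - #D := by
      rw [eq_sub_iff_add_eq]
      exact_mod_cast hD
    have hsum : ∑ i ∈ s, w i * #(X + B i + insert x C) ≤
        ∑ i ∈ s, w i * #(X + B i + C) + ∑ i ∈ s, w i * #(X + B i) -
          ∑ i ∈ s, w i * #(D + B i) := by
      rw [← sum_add_distrib, ← sum_sub_distrib]
      refine sum_le_sum fun i hi ↦ ?_
      rw [← mul_add, ← mul_sub]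
      refine mul_le_mul_of_nonneg_left (le_sub_iff_add_le.2 ?_) (hw i hi)
      exact_mod_cast hB (B i)
    calc (∑ i ∈ s, w i * #(X + B i + insert x C)) * #X
        ≤ (∑ i ∈ s, w i * #(X + B i + C) + ∑ i ∈ s, w i * #(X + B i) -
            ∑ i ∈ s, w i * #(D + B i)) * #X := by gcongr
      _ ≤ (∑ i ∈ s, w i * #(X + B i)) * (#(X + C) + #X - #D) := by linarith [hX D hDX]
      _ = _ := by rw [hD']

/-- Petridis' method: the weights `#(X + B i)⁻¹` let one subset `Z` serve all the summands. -/
lemma exists_subset_card_add_add_mul_le {X : Finset G} (hX : X.Nonempty) (s : Finset ι)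
    (B : ι → Finset G) :
    ∃ Z ⊆ X, Z.Nonempty ∧
      ∀ i ∈ s, ∀ C : Finset G, #(Z + B i + C) * #X ≤ #s * #(X + B i) * #(Z + C) := by
  set w : ι → ℝ := fun i ↦ (#(X + B i) : ℝ)⁻¹
  have hw (i : ι) : 0 ≤ w i := by positivity
  obtain ⟨Z, hZX, hZ, hmin⟩ := exists_nonempty_subset_ratio_min hX
    (f := fun Z ↦ ∑ i ∈ s, w i * #(Z + B i)) (by simp)
  have hZpos : (0 : ℝ) < #Z := mod_cast hZ.card_pos
  have hsum : ∑ i ∈ s, w i * #(X + B i) ≤ #s := by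
    rw [← nsmul_one]
    exact sum_le_card_nsmul _ _ _ fun i _ ↦ inv_mul_le_one
  refine ⟨Z, hZX, hZ, fun i hi C ↦ ?_⟩
  obtain hB | hB := (X + B i).eq_empty_or_nonempty
  · have hB' : B i = ∅ := (add_eq_empty.1 hB).resolve_left hX.ne_empty
    simp [hB']
  have hBpos : (0 : ℝ) < #(X + B i) := mod_cast hB.card_pos
  suffices h : (#(Z + B i + C) : ℝ) * #X ≤ #s * #(X + B i) * #(Z + C) from mod_cast h
  refine le_of_mul_le_mul_right ?_ (mul_pos hZpos (inv_pos.2 hBpos))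
  calc (#(Z + B i + C) : ℝ) * #X * (#Z * w i) = w i * #(Z + B i + C) * #Z * #X := by ring
    _ ≤ (∑ j ∈ s, w j * #(Z + B j + C)) * #Z * #X := by
      gcongr
      exact single_le_sum (f := fun j ↦ w j * #(Z + B j + C)) (fun j _ ↦ by positivity) hi
    _ ≤ (∑ j ∈ s, w j * #(Z + B j)) * #(Z + C) * #X := by
      refine mul_le_mul_of_nonneg_right ?_ (by positivity)
      exact sum_card_add_add_mul_le (fun j _ ↦ hw j) (fun Z' hZ' ↦ hmin Z' (hZ'.trans hZX)) C
    _ = (∑ j ∈ s, w j * #(Z + B j)) * #X * #(Z + C) := by ring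
    _ ≤ #s * #Z * #(Z + C) := by
      refine mul_le_mul_of_nonneg_right ?_ (by positivity)
      exact (hmin X Subset.rfl).trans (by gcongr)
    _ = #s * #Z * #(Z + C) * (#(X + B i) * w i) := by rw [mul_inv_cancel₀ hBpos.ne', mul_one]
    _ = _ := by ring

/-- Plünnecke's inequality, in Ruzsa's form with different summands. -/
lemma exists_subset_card_add_sum_le {X : Finset G} (hX : X.Nonempty) (s : Finset ι)
    (B : ι → Finset G) :
    ∃ Z ⊆ X, Z.Nonempty ∧
      #(Z + ∑ i ∈ s, B i) * #X ^ #s ≤ #s ^ #s * (∏ i ∈ s, #(X + B i)) * #Z := by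
  classical
  obtain ⟨Z, hZX, hZ, hadd⟩ := exists_subset_card_add_add_mul_le hX s B
  refine ⟨Z, hZX, hZ, ?_⟩
  suffices h : ∀ t ⊆ s,
      #(Z + ∑ i ∈ t, B i) * #X ^ #t ≤ #s ^ #t * (∏ i ∈ t, #(X + B i)) * #Z from h s Subset.rfl
  intro t
  induction t using Finset.induction_on with
  | empty => simp
  | insert i t hi ih =>
    intro hts
    rw [sum_insert hi, prod_insert hi, card_insert_of_notMem hi, ← add_assoc]
    calc #(Z + B i + ∑ j ∈ t, B j) * #X ^ (#t + 1)
        = #(Z + B i + ∑ j ∈ t, B j) * #X * #X ^ #t := by ring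
      _ ≤ #s * #(X + B i) * #(Z + ∑ j ∈ t, B j) * #X ^ #t := by
        exact Nat.mul_le_mul_right _ (hadd i (hts (mem_insert_self i t)) _)
      _ = #s * #(X + B i) * (#(Z + ∑ j ∈ t, B j) * #X ^ #t) := by ring
      _ ≤ #s * #(X + B i) * (#s ^ #t * (∏ j ∈ t, #(X + B j)) * #Z) := by
        exact Nat.mul_le_mul_left _ (ih ((subset_insert i t).trans hts))
      _ = _ := by ring

/-- A maximal such `Z` is large, because otherwise Plünnecke's inequality for `X \ Z` extends it. -/
lemma exists_large_subset_card_add_sum_le (X : Finset G) (s : Finset ι) (B : ι → Finset G) :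
    ∃ Z ⊆ X, #X ≤ 2 * #Z ∧
      #(Z + ∑ i ∈ s, B i) * #X ^ #s ≤ (2 * #s) ^ #s * (∏ i ∈ s, #(X + B i)) * #Z := by
  set S := ∑ i ∈ s, B i
  set P := ∏ i ∈ s, #(X + B i)
  obtain ⟨Z, hZ, hmax⟩ := exists_max_image
    {Z ∈ X.powerset | #(Z + S) * #X ^ #s ≤ (2 * #s) ^ #s * P * #Z} card ⟨∅, by simp⟩
  simp only [mem_filter, mem_powerset] at hZ hmax
  refine ⟨Z, hZ.1, ?_, hZ.2⟩
  by_contra! hlt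
  have hsdiff : #X ≤ 2 * #(X \ Z) := by
    have := card_sdiff_add_card_eq_card hZ.1
    omega
  obtain ⟨W, hWsub, hW, hWle⟩ := exists_subset_card_add_sum_le (X := X \ Z)
    (card_pos.1 (by omega)) s B
  have hunion : #(Z ∪ W) = #Z + #W :=
    card_union_of_disjoint (disjoint_of_subset_right hWsub disjoint_sdiff)
  have hWS : #(W + S) * #X ^ #s ≤ (2 * #s) ^ #s * P * #W :=
    calc #(W + S) * #X ^ #s ≤ #(W + S) * (2 * #(X \ Z)) ^ #s := by gcongr
      _ = 2 ^ #s * (#(W + S) * #(X \ Z) ^ #s) := by ring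
      _ ≤ 2 ^ #s * (#s ^ #s * (∏ i ∈ s, #(X \ Z + B i)) * #W) := by gcongr
      _ ≤ 2 ^ #s * (#s ^ #s * P * #W) := by
        gcongr
        exact prod_le_prod' fun i _ ↦ card_le_card (add_subset_add_right sdiff_subset)
      _ = _ := by ring
  have hle : #((Z ∪ W) + S) * #X ^ #s ≤ (2 * #s) ^ #s * P * #(Z ∪ W) :=
    calc #((Z ∪ W) + S) * #X ^ #s ≤ (#(Z + S) + #(W + S)) * #X ^ #s := by
          rw [union_add]
          gcongr
          exact card_union_le _ _
      _ ≤ (2 * #s) ^ #s * P * (#Z + #W) := by linarith [hZ.2]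
      _ = _ := by rw [hunion]
  have := hmax (Z ∪ W) ⟨union_subset hZ.1 (hWsub.trans sdiff_subset), hle⟩
  have := hW.card_pos
  omega

end Sumsets

section Covering

lemma one_add_log_mul_add_one_le {x y r : ℝ} (hx : 0 < x) (hy : 0 < y) (hr : 0 ≤ r)
    (h : y ≤ r * (y - x)) :
    (1 + Real.log x) * r + 1 ≤ (1 + Real.log y) * r := by
  have hlog := Real.log_le_sub_one_of_pos (div_pos hx hy)
  rw [Real.log_div hx.ne' hy.ne'] at hlog
  have hratio : 1 ≤ r * (1 - x / y) := by
    rw [one_sub_div hy.ne', ← mul_div_assoc, one_le_div hy]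
    exact h
  nlinarith

variable {G : Type*} [AddCommGroup G] {A B C D : Set G} {K L r : ℝ}

lemma covByVAdd_add (hAB : CovByVAdd G K A B) (hCD : CovByVAdd G L C D) :
    CovByVAdd G (K * L) (A + C) (B + D) := by
  classical
  have hK := hAB.nonneg
  obtain ⟨S, hS, hAS⟩ := hAB
  obtain ⟨T, hT, hCT⟩ := hCD
  refine ⟨S + T, ?_, ?_⟩
  · calc (#(S + T) : ℝ) ≤ #S * #T := mod_cast card_add_le
      _ ≤ K * L := by gcongr
  · calc A + C ⊆ (S + B) + (T + D) := Set.add_subset_add hAS hCT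
      _ = (↑(S + T) : Set G) + (B + D) := by rw [coe_add, add_add_add_comm]

lemma covByVAdd_union (hAB : CovByVAdd G K A B) (hCB : CovByVAdd G L C B) :
    CovByVAdd G (K + L) (A ∪ C) B := by
  classical
  obtain ⟨S, hS, hAS⟩ := hAB
  obtain ⟨T, hT, hCT⟩ := hCB
  refine ⟨S ∪ T, ?_, ?_⟩
  · calc (#(S ∪ T) : ℝ) ≤ #S + #T := mod_cast card_union_le S T
      _ ≤ K + L := by gcongr
  · rw [coe_union, Set.union_vadd]
    exact Set.union_subset_union hAS hCT

lemma covByVAdd_vadd_self (t : G) (B : Set G) : CovByVAdd G 1 (t +ᵥ B) B :=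
  ⟨{t}, by simp, by rw [coe_singleton, Set.singleton_vadd]⟩

lemma covByVAdd_neg (hAB : CovByVAdd G K A B) : CovByVAdd G K (-A) (-B) := by
  classical
  obtain ⟨S, hS, hAS⟩ := hAB
  refine ⟨-S, by rwa [card_neg], ?_⟩
  calc -A ⊆ -((S : Set G) + B) := Set.neg_subset_neg.2 hAS
    _ = ((-S : Finset G) : Set G) + -B := by rw [neg_add, coe_neg]

lemma card_le_of_covByVAdd {A B : Finset G} (h : CovByVAdd G K (A : Set G) (B : Set G)) :
    (#A : ℝ) ≤ K * #B := by
  classical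
  obtain ⟨S, hS, hAS⟩ := h
  have hAS' : A ⊆ S + B := mod_cast hAS
  calc (#A : ℝ) ≤ #S * #B := mod_cast (card_le_card hAS').trans card_add_le
    _ ≤ K * #B := by gcongr

variable [DecidableEq G]

/-- Greedy covering: each step removes a proportion `1 / r` of what is left. -/
lemma covByVAdd_of_forall_subset {Y H : Finset G} (hr : 0 ≤ r)
    (h : ∀ X ⊆ Y, X.Nonempty → ∃ t : G, (#X : ℝ) ≤ r * #(X ∩ (t +ᵥ H))) :
    CovByVAdd G ((1 + Real.log #Y) * r) (Y : Set G) (H : Set G) := by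
  induction Y using Finset.strongInduction with
  | H Y ih =>
    obtain rfl | hY := Y.eq_empty_or_nonempty
    · simpa using (covByVAdd_zero.2 rfl : CovByVAdd G 0 (∅ : Set G) (H : Set G)).mono hr
    obtain ⟨t, ht⟩ := h Y Subset.rfl hY
    set Y' := Y \ (t +ᵥ H) with hY'
    have hsplit : (#(Y ∩ (t +ᵥ H)) : ℝ) = #Y - #Y' := by
      rw [eq_sub_iff_add_eq, add_comm]
      exact_mod_cast card_sdiff_add_card_inter Y (t +ᵥ H)
    rw [hsplit] at ht
    have hYpos : (0 : ℝ) < #Y := mod_cast hY.card_pos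
    have hcov : CovByVAdd G ((1 + Real.log #Y) * r - 1) (Y' : Set G) (H : Set G) := by
      obtain hempty | hne := Y'.eq_empty_or_nonempty
      · have hr1 : 1 ≤ r := by
          rw [hempty, card_empty, Nat.cast_zero, sub_zero] at ht
          exact (le_mul_iff_one_le_left hYpos).1 ht
        have hlog : 0 ≤ Real.log #Y := Real.log_natCast_nonneg _
        rw [hempty, coe_empty]
        exact (covByVAdd_zero.2 rfl).mono (by nlinarith)
      · have hssub : Y' ⊂ Y := by
          refine sdiff_subset.ssubset_of_ne fun heq ↦ ?_
          rw [hY', heq, sub_self, mul_zero] at ht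
          exact ht.not_gt hYpos
        refine (ih Y' hssub fun X hX ↦ h X (hX.trans sdiff_subset)).mono ?_
        rw [le_sub_iff_add_le]
        exact one_add_log_mul_add_one_le (mod_cast hne.card_pos) hYpos hr ht
    refine ((covByVAdd_union (covByVAdd_vadd_self t _) hcov).mono (by linarith)).subset_left ?_
    rw [coe_sdiff, coe_vadd_finset, Set.union_sdiff_self]
    exact Set.subset_union_right

lemma addEnergy_neg_right (s t : Finset G) : s.addEnergy (-t) = s.addEnergy t := by
  simp_rw [addEnergy_eq_card_filter]
  refine card_bij' (fun x _ ↦ ((x.1.1, -x.2.2), (x.2.1, -x.1.2)))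
    (fun x _ ↦ ((x.1.1, -x.2.2), (x.2.1, -x.1.2))) ?_ ?_ ?_ ?_ <;>
  · rintro ⟨⟨a, b⟩, c, d⟩ h
    simp_all [← sub_eq_add_neg, sub_eq_sub_iff_add_eq_add]

lemma exists_addEnergy_le (s t : Finset G) :
    ∃ a : G, s.addEnergy t ≤ #s * #t * #(s ∩ (a +ᵥ -t)) := by
  obtain hst | hst := (s + t).eq_empty_or_nonempty
  · obtain rfl | rfl := add_eq_empty.1 hst <;> simp
  obtain ⟨a, -, hmax⟩ := exists_max_image (s + t) (s.addConvolution t) hst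
  refine ⟨a, ?_⟩
  rw [card_inter_vadd_neg, addEnergy_eq_sum_sq']
  calc ∑ b ∈ s + t, s.addConvolution t b ^ 2
      ≤ ∑ b ∈ s + t, s.addConvolution t b * s.addConvolution t a :=
        sum_le_sum fun b hb ↦ by rw [sq]; exact Nat.mul_le_mul_left _ (hmax b hb)
    _ = #s * #t * s.addConvolution t a := by
      rw [← sum_mul, ← card_product]
      congr 1
      exact (card_eq_sum_card_fiberwise fun x hx ↦ by
        rw [mem_coe, mem_product] at hx
        exact add_mem_add hx.1 hx.2).symm

lemma exists_card_mul_card_le {B H : Finset G} (hH : H = B ∨ H = -B) (X : Finset G) :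
    ∃ t : G, #X * #B ≤ #(X + B) * #(X ∩ (t +ᵥ H)) := by
  obtain rfl | hX := X.eq_empty_or_nonempty
  · simp
  obtain rfl | hB := B.eq_empty_or_nonempty
  · simp
  obtain ⟨t, ht⟩ : ∃ t : G, X.addEnergy B ≤ #X * #B * #(X ∩ (t +ᵥ H)) := by
    obtain rfl | rfl := hH
    · simpa only [neg_neg, card_neg, addEnergy_neg_right] using exists_addEnergy_le X (-H)
    · exact exists_addEnergy_le X B
  refine ⟨t, Nat.le_of_mul_le_mul_left ?_ (mul_pos hX.card_pos hB.card_pos)⟩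
  calc #X * #B * (#X * #B) = #X ^ 2 * #B ^ 2 := by ring
    _ ≤ #(X + B) * X.addEnergy B := le_card_add_mul_addEnergy X B
    _ ≤ #(X + B) * (#X * #B * #(X ∩ (t +ᵥ H))) := by gcongr
    _ = _ := by ring

lemma covByVAdd_of_eq_or_eq_neg {B H : Finset G} (hH : H = B ∨ H = -B) (hB : B.Nonempty)
    (Y : Finset G) :
    CovByVAdd G ((1 + Real.log #Y) * (#(Y + B) / #B)) (Y : Set G) (H : Set G) := by
  refine covByVAdd_of_forall_subset (by positivity) fun X hXY _ ↦ ?_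
  obtain ⟨t, ht⟩ := exists_card_mul_card_le hH X
  refine ⟨t, ?_⟩
  rw [div_mul_eq_mul_div, le_div_iff₀ (mod_cast hB.card_pos)]
  calc (#X : ℝ) * #B ≤ #(X + B) * #(X ∩ (t +ᵥ H)) := mod_cast ht
    _ ≤ #(Y + B) * #(X ∩ (t +ᵥ H)) := by gcongr

end Covering

section Dilates

variable {M G : Type*} [Monoid M] [AddCommGroup G] [DistribMulAction M G] [DecidableEq G]
  {A P : Finset G} {N : ℕ}

lemma covByVAdd_smul {y : M} (hN : 1 ≤ N) (hP : N ≤ #(P ∩ y • A)) {H : Finset G}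
    (hH : H = P ∩ y • A ∨ H = -(P ∩ y • A)) :
    CovByVAdd G ((1 + Real.log #A) * (#(A + A) / N)) (y • A : Finset G) (H : Set G) := by
  have hne : (P ∩ y • A).Nonempty := card_pos.1 (hN.trans hP)
  have hyA : 0 < #(y • A) := (hne.mono inter_subset_right).card_pos
  refine (covByVAdd_of_eq_or_eq_neg hH hne (y • A)).mono ?_
  have : 0 ≤ Real.log #(y • A) := Real.log_natCast_nonneg _
  have hcard : #(y • A) ≤ #A := card_image_le
  have hsum : #(y • A + P ∩ y • A) ≤ #(A + A) :=
    calc #(y • A + P ∩ y • A) ≤ #(y • A + y • A) := by gcongr; exact inter_subset_right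
      _ = #(y • (A + A)) := by rw [smul_add]
      _ ≤ #(A + A) := card_image_le
  gcongr

lemma card_smul_sub_smul_add_le (hN : 1 ≤ N) {a b c d : M} (ha : N ≤ #(P ∩ a • A))
    (hb : N ≤ #(P ∩ b • A)) (hc : N ≤ #(P ∩ c • A)) (hd : N ≤ #(P ∩ d • A)) :
    (#(a • A - b • A + (c • A - d • A)) : ℝ) ≤
      ((1 + Real.log #A) * (#(A + A) / N)) ^ 4 * #(P + P + (P + P)) := by
  have cov (y : M) (hy : N ≤ #(P ∩ y • A)) :
      CovByVAdd G ((1 + Real.log #A) * (#(A + A) / N)) (y • A : Finset G) (P : Set G) :=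
    (covByVAdd_smul hN hy (.inl rfl)).subset_right (mod_cast inter_subset_left)
  have cov_neg (y : M) (hy : N ≤ #(P ∩ y • A)) :
      CovByVAdd G ((1 + Real.log #A) * (#(A + A) / N)) (-(y • A : Finset G)) (P : Set G) := by
    have h := covByVAdd_neg (covByVAdd_smul hN hy (.inr rfl))
    rw [← coe_neg, ← coe_neg, neg_neg] at h
    exact h.subset_right (mod_cast inter_subset_left)
  have h := covByVAdd_add (covByVAdd_add (cov a ha) (cov_neg b hb))
    (covByVAdd_add (cov c hc) (cov_neg d hd))
  rw [sub_eq_add_neg, sub_eq_add_neg]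
  refine (card_le_of_covByVAdd (mod_cast h)).trans_eq ?_
  ring

end Dilates

lemma exists_popular_level {ι : Type*} (s : Finset ι) (f : ι → ℕ) {n : ℕ} (hn : 0 < n)
    (hf : ∀ i ∈ s, f i ≤ n) :
    ∃ N : ℕ, 1 ≤ N ∧
      ((∑ i ∈ s, f i : ℕ) : ℝ) ≤ (1 + Real.log n) * (N * #{i ∈ s | N ≤ f i}) := by
  obtain ⟨k, -, hk⟩ := exists_max_image (range n) (fun k ↦ (k + 1) * #{i ∈ s | k + 1 ≤ f i})
    (nonempty_range_iff.2 hn.ne')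
  refine ⟨k + 1, by omega, ?_⟩
  have hlayers : ∑ i ∈ s, f i = ∑ j ∈ range n, #{i ∈ s | j + 1 ≤ f i} := by
    simp_rw [card_filter]
    rw [sum_comm]
    refine sum_congr rfl fun i hi ↦ ?_
    have hrange : {j ∈ range n | j + 1 ≤ f i} = range (f i) := by
      ext j
      have := hf i hi
      simp only [mem_filter, mem_range]
      omega
    rw [← card_filter, hrange, card_range]
  calc ((∑ i ∈ s, f i : ℕ) : ℝ) = ∑ j ∈ range n, (#{i ∈ s | j + 1 ≤ f i} : ℝ) := by
        rw [hlayers, Nat.cast_sum]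
    _ ≤ ∑ j ∈ range n, (j + 1 : ℝ)⁻¹ * ((k + 1 : ℕ) * #{i ∈ s | k + 1 ≤ f i}) := by
        refine sum_le_sum fun j hj ↦ ?_
        rw [inv_mul_eq_div, le_div_iff₀ (by positivity), mul_comm]
        exact_mod_cast hk j hj
    _ = (harmonic n : ℝ) * ((k + 1 : ℕ) * #{i ∈ s | k + 1 ≤ f i}) := by
        rw [← sum_mul, harmonic]
        push_cast
        rfl
    _ ≤ _ := by
        gcongr
        exact harmonic_le_one_add_log n

section Field

variable {F : Type*} [Field F] [DecidableEq F]

lemma mulEnergy_le_sum_card_smul_inter_smul {A B : Finset F} (hA : 0 ∉ A) (hB : 0 ∉ B) :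
    A.mulEnergy B ≤ ∑ x ∈ A, ∑ y ∈ B, #(x • B ∩ y • A) := by
  rw [mulEnergy_eq_card_filter, ← sum_product', ← card_sigma]
  refine card_le_card_of_injOn (fun q ↦ ⟨(q.1.1, q.2.2), q.1.1 * q.1.2⟩) ?_ ?_
  · rintro ⟨⟨a, b⟩, c, d⟩ hq
    simp only [coe_filter, mem_product, Set.mem_ofPred_eq] at hq
    obtain ⟨⟨⟨ha, hb⟩, hc, hd⟩, heq⟩ := hq
    refine mem_coe.2 (mem_sigma.2 ⟨mem_product.2 ⟨ha, hd⟩, mem_inter.2 ⟨?_, ?_⟩⟩)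
    · exact smul_mem_smul_finset hb
    · exact mem_smul_finset.2 ⟨c, hc, (mul_comm d c).trans heq.symm⟩
  · rintro ⟨⟨a, b⟩, c, d⟩ hq ⟨⟨a', b'⟩, c', d'⟩ hq' h
    simp only [coe_filter, mem_product, Set.mem_ofPred_eq] at hq hq'
    simp only [Sigma.mk.injEq, Prod.mk.injEq, heq_eq_eq] at h
    obtain ⟨⟨rfl, rfl⟩, h⟩ := h
    have ha : a ≠ 0 := ne_of_mem_of_not_mem hq.1.1.1 hA
    have hd : d ≠ 0 := ne_of_mem_of_not_mem hq.1.2.2 hB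
    have hcd : c * d = c' * d := by rw [← hq.2, h, hq'.2]
    rw [mul_left_cancel₀ ha h, mul_right_cancel₀ hd hcd]

lemma exists_card_mul_card_sq_le {A B : Finset F} (hA : 0 ∉ A) (hB : 0 ∉ B) (hne : A.Nonempty) :
    ∃ x ∈ A, #A * #B ^ 2 ≤ #(A * B) * ∑ y ∈ B, #(x • B ∩ y • A) := by
  obtain ⟨x, hx, hmax⟩ := exists_max_image A (fun x ↦ ∑ y ∈ B, #(x • B ∩ y • A)) hne
  refine ⟨x, hx, Nat.le_of_mul_le_mul_left ?_ hne.card_pos⟩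
  calc #A * (#A * #B ^ 2) = #A ^ 2 * #B ^ 2 := by ring
    _ ≤ #(A * B) * A.mulEnergy B := le_card_mul_mul_mulEnergy A B
    _ ≤ #(A * B) * (#A * ∑ y ∈ B, #(x • B ∩ y • A)) := by
      gcongr
      exact (mulEnergy_le_sum_card_smul_inter_smul hA hB).trans (sum_le_card_nsmul _ _ _ hmax)
    _ = _ := by ring

lemma exists_popular_dilates {A B : Finset F} (hA : 0 ∉ A) (hB : 0 ∉ B) (hne : A.Nonempty) :
    ∃ x ∈ A, ∃ N : ℕ, 1 ≤ N ∧ (#A : ℝ) * #B ^ 2 ≤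
      #(A * B) * ((1 + Real.log #A) * (N * #{y ∈ B | N ≤ #(x • B ∩ y • A)})) := by
  obtain ⟨x, hx, hle⟩ := exists_card_mul_card_sq_le hA hB hne
  obtain ⟨N, hN, hlevel⟩ := exists_popular_level B (fun y ↦ #(x • B ∩ y • A)) hne.card_pos
    fun y _ ↦ (card_le_card inter_subset_right).trans card_image_le
  refine ⟨x, hx, N, hN, ?_⟩
  calc (#A : ℝ) * #B ^ 2 ≤ #(A * B) * (∑ y ∈ B, #(x • B ∩ y • A) : ℕ) := mod_cast hle
    _ ≤ _ := by gcongr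

lemma card_mul_card_le_card_add_smul {X Y : Finset F} {ξ : F} (hξ : ξ ∉ (X - X) / (Y - Y)) :
    #X * #Y ≤ #(X + ξ • Y) := by
  rw [← card_product]
  refine card_le_card_of_injOn (fun q ↦ q.1 + ξ • q.2) ?_ ?_
  · rintro ⟨x, y⟩ hq
    rw [mem_coe, mem_product] at hq
    exact add_mem_add hq.1 (smul_mem_smul_finset hq.2)
  · rintro ⟨x, y⟩ hq ⟨x', y'⟩ hq' h
    rw [mem_coe, mem_product] at hq hq'
    simp only [smul_eq_mul] at h
    obtain rfl : y = y' := by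
      by_contra hne
      refine hξ (mem_div.2 ⟨_, sub_mem_sub hq'.1 hq.1, _, sub_mem_sub hq.2 hq'.2, ?_⟩)
      rw [div_eq_iff (sub_ne_zero.2 hne)]
      linear_combination -h
    rw [add_right_cancel h]

lemma exists_card_add_smul_le {Y : Finset F} {ξ : F} (hξ : ξ ∈ (Y - Y) / (Y - Y)) :
    ∃ a ∈ Y, ∃ b ∈ Y, ∃ c ∈ Y, ∃ d ∈ Y,
      #(Y + ξ • Y) ≤ #(a • Y - b • Y + (c • Y - d • Y)) := by
  have hY : Y.Nonempty := by
    by_contra! hempty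
    simp [hempty] at hξ
  obtain ⟨y, rfl⟩ | hnontriv := hY.exists_eq_singleton_or_nontrivial
  · refine ⟨y, mem_singleton_self y, y, mem_singleton_self y, y, mem_singleton_self y, y,
      mem_singleton_self y, ?_⟩
    simp
  obtain ⟨a, ha, b, hb, c, hc, d, hd, hab, rfl⟩ : ∃ a ∈ Y, ∃ b ∈ Y, ∃ c ∈ Y, ∃ d ∈ Y,
      a - b ≠ 0 ∧ (c - d) / (a - b) = ξ := by
    obtain ⟨_, hs, _, ht, rfl⟩ := mem_div.1 hξ
    obtain ⟨c, hc, d, hd, rfl⟩ := mem_sub.1 hs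
    obtain ⟨a, ha, b, hb, rfl⟩ := mem_sub.1 ht
    obtain hab | hab := eq_or_ne (a - b) 0
    · obtain ⟨a', ha', b', hb', hne⟩ := hnontriv
      exact ⟨a', ha', b', hb', c, hc, c, hc, sub_ne_zero.2 hne, by simp [hab]⟩
    · exact ⟨a, ha, b, hb, c, hc, d, hd, hab, rfl⟩
  refine ⟨a, ha, b, hb, c, hc, d, hd, ?_⟩
  have sub_smul_subset (s t : F) : (s - t) • Y ⊆ s • Y - t • Y := by
    intro _ hw
    obtain ⟨y, hy, rfl⟩ := mem_smul_finset.1 hw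
    rw [sub_smul]
    exact sub_mem_sub (smul_mem_smul_finset hy) (smul_mem_smul_finset hy)
  calc #(Y + ((c - d) / (a - b)) • Y) = #((a - b) • (Y + ((c - d) / (a - b)) • Y)) :=
        (card_smul_finset₀ hab _).symm
    _ = #((a - b) • Y + (c - d) • Y) := by rw [smul_add, smul_smul, mul_div_cancel₀ _ hab]
    _ ≤ _ := card_le_card (add_subset_add (sub_smul_subset a b) (sub_smul_subset c d))

lemma addEnergy_smul_eq_card_filter {H G : Type*} [Group H] [Add G] [MulAction H G]
    [DecidableEq G] (X Y : Finset G) (ξ : H) :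
    X.addEnergy (ξ • Y) =
      #{q ∈ (X ×ˢ Y) ×ˢ X ×ˢ Y | q.1.1 + ξ • q.1.2 = q.2.1 + ξ • q.2.2} := by
  rw [addEnergy_eq_card_filter]
  refine card_bij' (fun q _ ↦ ((q.1.1, ξ⁻¹ • q.1.2), (q.2.1, ξ⁻¹ • q.2.2)))
    (fun q _ ↦ ((q.1.1, ξ • q.1.2), (q.2.1, ξ • q.2.2))) ?_ ?_ ?_ ?_ <;>
  simp +contextual [inv_smul_mem_iff]

lemma card_filter_add_smul_eq_le_one [Fintype F] {s t : F × F} (hst : s ≠ t) :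
    #{ξ : Fˣ | s.1 + ξ • s.2 = t.1 + ξ • t.2} ≤ 1 := by
  refine card_le_one.2 fun ξ hξ η hη ↦ ?_
  simp only [mem_filter_univ, Units.smul_def, smul_eq_mul] at hξ hη
  have hne : s.2 - t.2 ≠ 0 := fun h ↦ hst (Prod.ext (by linear_combination hξ - ξ * h)
    (sub_eq_zero.1 h))
  exact Units.ext (mul_right_cancel₀ hne (by linear_combination hξ - hη))

lemma sum_addEnergy_smul_le [Fintype F] (X Y : Finset F) :
    ∑ ξ : Fˣ, X.addEnergy (ξ • Y) ≤ #X * #Y * (Fintype.card Fˣ + #X * #Y) := by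
  simp_rw [addEnergy_smul_eq_card_filter, card_filter]
  rw [sum_comm]
  simp_rw [← card_filter]
  calc ∑ q ∈ (X ×ˢ Y) ×ˢ X ×ˢ Y, #{ξ : Fˣ | q.1.1 + ξ • q.1.2 = q.2.1 + ξ • q.2.2}
      ≤ ∑ q ∈ (X ×ˢ Y) ×ˢ X ×ˢ Y, ((if q.1 = q.2 then Fintype.card Fˣ else 0) + 1) := by
        refine sum_le_sum fun q _ ↦ ?_
        split_ifs with hq
        · exact (card_le_univ _).trans (Nat.le_succ _)
        · exact (card_filter_add_smul_eq_le_one hq).trans_eq (zero_add 1).symm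
    _ = #X * #Y * (Fintype.card Fˣ + #X * #Y) := by
        rw [sum_add_distrib, sum_product, sum_congr rfl fun s hs ↦ (sum_ite_eq _ s _).trans
          (if_pos hs)]
        simp only [sum_const, card_product, smul_eq_mul, mul_one]
        ring

lemma exists_le_card_add_smul [Fintype F] (X Y : Finset F) :
    ∃ ξ : F, #X * #Y * Fintype.card Fˣ ≤ #(X + ξ • Y) * (Fintype.card Fˣ + #X * #Y) := by
  obtain ⟨ξ, -, hmin⟩ := exists_min_image univ (fun ξ : Fˣ ↦ X.addEnergy (ξ • Y)) ⟨1, mem_univ 1⟩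
  refine ⟨ξ, ?_⟩
  obtain hzero | hpos := Nat.eq_zero_or_pos (#X * #Y)
  · simp [hzero]
  refine Nat.le_of_mul_le_mul_left ?_ hpos
  calc #X * #Y * (#X * #Y * Fintype.card Fˣ)
      = Fintype.card Fˣ * (#X ^ 2 * #(ξ • Y) ^ 2) := by rw [card_smul_finset]; ring
    _ ≤ Fintype.card Fˣ * (#(X + ξ • Y) * X.addEnergy (ξ • Y)) :=
      Nat.mul_le_mul_left _ (le_card_add_mul_addEnergy X (ξ • Y))
    _ = #(X + ξ • Y) * (#(univ : Finset Fˣ) • X.addEnergy (ξ • Y)) := by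
      rw [card_univ, smul_eq_mul]; ring
    _ ≤ #(X + ξ • Y) * ∑ η : Fˣ, X.addEnergy (η • Y) := by
      gcongr
      exact card_nsmul_le_sum _ _ _ hmin
    _ ≤ #(X + ξ • Y) * (#X * #Y * (Fintype.card Fˣ + #X * #Y)) := by
      gcongr
      exact sum_addEnergy_smul_le X Y
    _ = #X * #Y * (#((X + (ξ : F) • Y)) * (Fintype.card Fˣ + #X * #Y)) := by
      rw [← Units.smul_def]; ring

lemma exists_min_card_mul_card_le [Fintype F] (X Y : Finset F) :
    ∃ ξ : F, min (#X * #Y) (Fintype.card F) ≤ 4 * #(X + ξ • Y) := by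
  obtain ⟨ξ, hξ⟩ := exists_le_card_add_smul X Y
  refine ⟨ξ, ?_⟩
  have hunits : Fintype.card Fˣ + 1 = Fintype.card F := by
    rw [Fintype.card_units, Nat.sub_add_cancel Fintype.card_pos]
  have hpos : 0 < Fintype.card Fˣ := Fintype.card_pos
  obtain hle | hlt := le_or_gt (#X * #Y) (Fintype.card Fˣ)
  · have h : #X * #Y ≤ 2 * #(X + ξ • Y) := by
      refine Nat.le_of_mul_le_mul_right (hξ.trans ?_) hpos
      nlinarith
    exact (min_le_left _ _).trans (by omega)
  · have h : Fintype.card Fˣ ≤ 2 * #(X + ξ • Y) := by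
      refine Nat.le_of_mul_le_mul_left (hξ.trans ?_) (hpos.trans hlt)
      nlinarith
    exact (min_le_right _ _).trans (by omega)

end Field

section PrimeField

lemma exists_mem_add_one_notMem {n : ℕ} [NeZero n] {S : Finset (ZMod n)} (h0 : 0 ∈ S)
    (hS : S ≠ univ) : ∃ ξ ∈ S, ξ + 1 ∉ S := by
  by_contra! hstep
  refine hS (eq_univ_iff_forall.2 fun ξ ↦ ?_)
  rw [← ZMod.natCast_zmod_val ξ]
  generalize ξ.val = k
  induction k with
  | zero => simpa using h0
  | succ k ih => simpa using hstep k ih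

lemma card_pow_three_le_of_add_one_notMem {F : Type*} [Field F] [DecidableEq F] {Y : Finset F}
    (hY : Y.Nonempty) {ξ : F} (hξ : ξ + 1 ∉ (Y - Y) / (Y - Y)) :
    #Y ^ 3 ≤ 4 * #(Y + Y) * #(Y + ξ • Y) := by
  obtain ⟨Z, hZY, hZ, hle⟩ := exists_subset_card_add_sum_le hY univ ![ξ • Y, Y]
  simp only [Fin.sum_univ_two, Fin.prod_univ_two, Matrix.cons_val_zero, Matrix.cons_val_one,
    card_univ, Fintype.card_fin] at hle
  have hξZ : ξ + 1 ∉ (Z - Z) / (Y - Y) := fun h ↦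
    hξ (div_subset_div_right (sub_subset_sub hZY hZY) h)
  refine Nat.le_of_mul_le_mul_left ?_ hZ.card_pos
  calc #Z * #Y ^ 3 = #Z * #Y * #Y ^ 2 := by ring
    _ ≤ #(Z + (ξ + 1) • Y) * #Y ^ 2 := by
      gcongr
      exact card_mul_card_le_card_add_smul hξZ
    _ ≤ #(Z + (ξ • Y + Y)) * #Y ^ 2 := by
      gcongr
      rw [← one_smul F Y, ← coe_subset]
      push_cast
      simpa only [one_smul] using Set.add_smul_subset ξ 1 (Y : Set F)
    _ ≤ _ := hle
    _ = _ := by ring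

/-- The pivot `ξ` is any element if the quotient set `(Y - Y) / (Y - Y)` is the whole field, and
otherwise one with `ξ + 1` outside the quotient set. -/
lemma exists_pivot {p : ℕ} [Fact p.Prime] {Y : Finset (ZMod p)} (hY : Y.Nonempty) :
    ∃ ξ ∈ (Y - Y) / (Y - Y), p ≤ 4 * #(Y + ξ • Y) ∨
      (#Y ^ 2 ≤ p ∧ #Y ^ 3 ≤ 4 * #(Y + Y) * #(Y + ξ • Y)) := by
  obtain huniv | hne := eq_or_ne ((Y - Y) / (Y - Y)) univ
  · obtain ⟨ξ, hξ⟩ := exists_min_card_mul_card_le Y Y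
    rw [ZMod.card, ← sq] at hξ
    refine ⟨ξ, huniv ▸ mem_univ ξ, ?_⟩
    obtain hle | hlt := le_or_gt p (#Y ^ 2)
    · rw [min_eq_right hle] at hξ
      exact .inl hξ
    refine .inr ⟨hlt.le, ?_⟩
    rw [min_eq_left hlt.le] at hξ
    calc #Y ^ 3 = #Y * #Y ^ 2 := by ring
      _ ≤ #(Y + Y) * (4 * #(Y + ξ • Y)) := Nat.mul_le_mul (card_le_card_add_left hY) hξ
      _ = _ := by ring
  have h0 : 0 ∈ (Y - Y) / (Y - Y) := by
    obtain ⟨y, hy⟩ := hY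
    exact mem_div.2 ⟨_, sub_mem_sub hy hy, _, sub_mem_sub hy hy, by simp⟩
  obtain ⟨ξ, hξ, hξ1⟩ := exists_mem_add_one_notMem h0 hne
  refine ⟨ξ, hξ, .inr ⟨?_, card_pow_three_le_of_add_one_notMem hY hξ1⟩⟩
  calc #Y ^ 2 = #Y * #Y := sq _
    _ ≤ #(Y + (ξ + 1) • Y) := card_mul_card_le_card_add_smul hξ1
    _ ≤ p := (card_le_univ _).trans_eq (ZMod.card p)

lemma exists_large_subset_card_add_add_add_le {G : Type*} [AddCommGroup G] [DecidableEq G]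
    (A : Finset G) :
    ∃ B ⊆ A, #A ≤ 2 * #B ∧ #(B + (A + A + A)) * #A ^ 2 ≤ 216 * #(A + A) ^ 3 := by
  obtain ⟨B, hBA, hcard, hle⟩ := exists_large_subset_card_add_sum_le A univ fun _ : Fin 3 ↦ A
  simp only [Fin.sum_univ_three, Fin.prod_const, card_univ, Fintype.card_fin] at hle
  refine ⟨B, hBA, hcard, ?_⟩
  obtain rfl | hA := A.eq_empty_or_nonempty
  · simp
  refine Nat.le_of_mul_le_mul_right ?_ hA.card_pos
  calc #(B + (A + A + A)) * #A ^ 2 * #A = #(B + (A + A + A)) * #A ^ 3 := by ring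
    _ ≤ 216 * #(A + A) ^ 3 * #B := hle
    _ ≤ 216 * #(A + A) ^ 3 * #A := by gcongr

lemma card_add_smul_le_of_forall_le {F : Type*} [Field F] [DecidableEq F] {A B Y : Finset F}
    (hBA : B ⊆ A) (hYA : Y ⊆ A) {x : F} {N : ℕ} (hN : 1 ≤ N)
    (hY : ∀ y ∈ Y, N ≤ #(x • B ∩ y • A)) {ξ : F} (hξ : ξ ∈ (Y - Y) / (Y - Y)) :
    (#(Y + ξ • Y) : ℝ) ≤
      ((1 + Real.log #A) * (#(A + A) / N)) ^ 4 * #(B + (A + A + A)) := by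
  obtain ⟨a, ha, b, hb, c, hc, d, hd, hle⟩ := exists_card_add_smul_le hξ
  have hfour : #(x • B + x • B + (x • B + x • B)) ≤ #(B + (A + A + A)) := by
    calc #(x • B + x • B + (x • B + x • B)) = #(x • (B + (B + B + B))) := by
          simp only [smul_add, add_assoc]
      _ ≤ #(B + (B + B + B)) := card_image_le
      _ ≤ #(B + (A + A + A)) := by gcongr
  calc (#(Y + ξ • Y) : ℝ) ≤ #(a • Y - b • Y + (c • Y - d • Y)) := mod_cast hle
    _ ≤ #(a • A - b • A + (c • A - d • A)) := by gcongr
    _ ≤ ((1 + Real.log #A) * (#(A + A) / N)) ^ 4 * #(x • B + x • B + (x • B + x • B)) :=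
      card_smul_sub_smul_add_le hN (hY a ha) (hY b hb) (hY c hc) (hY d hd)
    _ ≤ _ := by gcongr

/-- Katz–Shen: all the sums `Y + ξ • Y` are small, because `Y` consists of dilation factors `y`
for which `y • A` has a large intersection with one fixed dilate of a subset of `A`. -/
lemma exists_subset_card_add_smul_le {F : Type*} [Field F] [DecidableEq F] {A : Finset F}
    (h0 : 0 ∉ A) (hA : A.Nonempty) :
    ∃ Y ⊆ A, ∃ D : ℝ, (#A : ℝ) ^ 3 ≤ D * #Y ∧ ∀ ξ ∈ (Y - Y) / (Y - Y),
      D ^ 4 * #A ^ 2 * #(Y + ξ • Y) ≤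
        2 ^ 16 * (1 + Real.log #A) ^ 8 * #(A * A) ^ 4 * #(A + A) ^ 7 := by
  obtain ⟨B, hBA, hcard, htriple⟩ := exists_large_subset_card_add_add_add_le A
  obtain ⟨x, -, N, hN, hpop⟩ := exists_popular_dilates h0 (fun h ↦ h0 (hBA h)) hA
  set Y := {y ∈ B | N ≤ #(x • B ∩ y • A)}
  set ℓ := 1 + Real.log #A
  have hYA : Y ⊆ A := (filter_subset _ _).trans hBA
  have hℓ : 0 ≤ ℓ := add_nonneg zero_le_one (Real.log_natCast_nonneg _)
  have hNpos : (0 : ℝ) < N := mod_cast hN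
  refine ⟨Y, hYA, 4 * ℓ * #(A * A) * N, ?_, fun ξ hξ ↦ ?_⟩
  · have hcard' : (#A : ℝ) ≤ 2 * #B := mod_cast hcard
    calc (#A : ℝ) ^ 3 = #A * (#A : ℝ) ^ 2 := by ring
      _ ≤ #A * (2 * #B : ℝ) ^ 2 := by gcongr
      _ = 4 * ((#A : ℝ) * #B ^ 2) := by ring
      _ ≤ 4 * (#(A * B) * (ℓ * (N * #Y))) := by gcongr
      _ ≤ 4 * (#(A * A) * (ℓ * (N * #Y))) := by gcongr
      _ = _ := by ring
  · have hbound := card_add_smul_le_of_forall_le hBA hYA hN (fun y hy ↦ (mem_filter.1 hy).2) hξ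
    have htriple' : (#(B + (A + A + A)) : ℝ) * #A ^ 2 ≤ 216 * #(A + A) ^ 3 := mod_cast htriple
    calc (4 * ℓ * #(A * A) * N) ^ 4 * #A ^ 2 * #(Y + ξ • Y)
        ≤ (4 * ℓ * #(A * A) * N) ^ 4 * #A ^ 2 *
          ((ℓ * (#(A + A) / N)) ^ 4 * #(B + (A + A + A))) := by gcongr
      _ = 256 * ℓ ^ 8 * #(A * A) ^ 4 * #(A + A) ^ 4 * (#(B + (A + A + A)) * #A ^ 2) := by
        field_simp
        ring
      _ ≤ 256 * ℓ ^ 8 * #(A * A) ^ 4 * #(A + A) ^ 4 * (216 * #(A + A) ^ 3) := by gcongr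
      _ = 55296 * (ℓ ^ 8 * #(A * A) ^ 4 * #(A + A) ^ 7) := by ring
      _ ≤ 2 ^ 16 * (ℓ ^ 8 * #(A * A) ^ 4 * #(A + A) ^ 7) := by gcongr; norm_num
      _ = _ := by ring

variable {p : ℕ} [Fact p.Prime]

lemma polynomial_growth_of_zero_notMem {A : Finset (ZMod p)} (h0 : 0 ∉ A) (hA : A.Nonempty) :
    p * (#A : ℝ) ^ 10 ≤ 2 ^ 18 * (1 + Real.log #A) ^ 8 * #(A * A) ^ 4 * #(A + A) ^ 7 ∨
      (#A : ℝ) ^ 14 ≤ 2 ^ 18 * (1 + Real.log #A) ^ 8 * #(A * A) ^ 4 * #(A + A) ^ 8 * √p := by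
  obtain ⟨Y, hYA, D, hcube, hD⟩ := exists_subset_card_add_smul_le h0 hA
  have hn : (0 : ℝ) < #A := mod_cast hA.card_pos
  have hDY : 0 < D * #Y := (pow_pos hn 3).trans_le hcube
  have hDpos : 0 < D := pos_of_mul_pos_left hDY (Nat.cast_nonneg _)
  have hY : Y.Nonempty := card_pos.1 (Nat.cast_pos.1 (pos_of_mul_pos_right hDY hDpos.le))
  obtain ⟨ξ, hξ, hfield | ⟨hsq, hYcube⟩⟩ := exists_pivot hY
  · left
    have hsqD : (#A : ℝ) ^ 2 ≤ D := by
      refine le_of_mul_le_mul_right ?_ hn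
      calc (#A : ℝ) ^ 2 * #A = #A ^ 3 := by ring
        _ ≤ D * #Y := hcube
        _ ≤ D * #A := by gcongr
    have hfield' : (p : ℝ) ≤ 4 * #(Y + ξ • Y) := mod_cast hfield
    calc p * (#A : ℝ) ^ 10 = p * ((#A ^ 2) ^ 4 * #A ^ 2) := by ring
      _ ≤ 4 * #(Y + ξ • Y) * (D ^ 4 * #A ^ 2) := by gcongr
      _ = 4 * (D ^ 4 * #A ^ 2 * #(Y + ξ • Y)) := by ring
      _ ≤ 4 * (2 ^ 16 * (1 + Real.log #A) ^ 8 * #(A * A) ^ 4 * #(A + A) ^ 7) := by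
        grw [hD ξ hξ]
      _ = _ := by ring
  · right
    have hsq' : (#Y : ℝ) ≤ √p := Real.le_sqrt_of_sq_le (mod_cast hsq)
    have hYcube' : (#Y : ℝ) ^ 3 ≤ 4 * #(A + A) * #(Y + ξ • Y) :=
      calc (#Y : ℝ) ^ 3 ≤ 4 * #(Y + Y) * #(Y + ξ • Y) := mod_cast hYcube
        _ ≤ 4 * #(A + A) * #(Y + ξ • Y) := by gcongr
    calc (#A : ℝ) ^ 14 = (#A ^ 3) ^ 4 * #A ^ 2 := by ring
      _ ≤ (D * #Y) ^ 4 * #A ^ 2 := by gcongr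
      _ = D ^ 4 * #A ^ 2 * (#Y ^ 3 * #Y) := by ring
      _ ≤ D ^ 4 * #A ^ 2 * (4 * #(A + A) * #(Y + ξ • Y) * √p) := by gcongr
      _ = 4 * #(A + A) * √p * (D ^ 4 * #A ^ 2 * #(Y + ξ • Y)) := by ring
      _ ≤ 4 * #(A + A) * √p *
          (2 ^ 16 * (1 + Real.log #A) ^ 8 * #(A * A) ^ 4 * #(A + A) ^ 7) := by grw [hD ξ hξ]
      _ = _ := by ring

lemma polynomial_growth {A : Finset (ZMod p)} (hA : 2 ≤ #A) :
    p * (#A : ℝ) ^ 10 ≤ 2 ^ 32 * (1 + Real.log #A) ^ 8 * #(A * A) ^ 4 * #(A + A) ^ 7 ∨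
      (#A : ℝ) ^ 14 ≤ 2 ^ 32 * (1 + Real.log #A) ^ 8 * #(A * A) ^ 4 * #(A + A) ^ 8 * √p := by
  set B := A.erase 0
  have hBA : B ⊆ A := erase_subset 0 A
  have herase : #A - 1 ≤ #B := pred_card_le_card_erase
  have hB : 0 < #B := by omega
  have hcard : (#A : ℝ) ≤ 2 * #B := by
    have : #A ≤ 2 * #B := by omega
    exact_mod_cast this
  have hlog : 0 ≤ Real.log #B := Real.log_natCast_nonneg _
  refine (polynomial_growth_of_zero_notMem (notMem_erase 0 A) (card_pos.1 hB)).imp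
    (fun h ↦ ?_) fun h ↦ ?_
  · calc p * (#A : ℝ) ^ 10 ≤ p * (2 * #B : ℝ) ^ 10 := by gcongr
      _ = 2 ^ 10 * (p * (#B : ℝ) ^ 10) := by ring
      _ ≤ 2 ^ 10 * (2 ^ 18 * (1 + Real.log #B) ^ 8 * #(B * B) ^ 4 * #(B + B) ^ 7) := by gcongr
      _ = 2 ^ 28 * (1 + Real.log #B) ^ 8 * #(B * B) ^ 4 * #(B + B) ^ 7 := by ring
      _ ≤ _ := by gcongr <;> norm_num
  · calc (#A : ℝ) ^ 14 ≤ (2 * #B : ℝ) ^ 14 := by gcongr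
      _ = 2 ^ 14 * (#B : ℝ) ^ 14 := by ring
      _ ≤ 2 ^ 14 * (2 ^ 18 * (1 + Real.log #B) ^ 8 * #(B * B) ^ 4 * #(B + B) ^ 8 * √p) := by
        gcongr
      _ = 2 ^ 32 * (1 + Real.log #B) ^ 8 * #(B * B) ^ 4 * #(B + B) ^ 8 * √p := by ring
      _ ≤ _ := by gcongr

end PrimeField

lemma le_mul_mul_of_pow_le {C X ℓ M : ℝ} {j k : ℕ} (hC : 1 ≤ C) (hℓ : 1 ≤ ℓ) (hM : 0 ≤ M)
    (hk : k ≠ 0) (hjk : j ≤ k) (h : X ^ k ≤ C * ℓ ^ j * M ^ k) : X ≤ C * ℓ * M := by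
  refine le_of_pow_le_pow_left₀ hk (by positivity) ?_
  calc X ^ k ≤ C * ℓ ^ j * M ^ k := h
    _ ≤ C ^ k * ℓ ^ k * M ^ k := by gcongr; exact le_self_pow₀ hC hk
    _ = (C * ℓ * M) ^ k := by rw [mul_pow, mul_pow]

lemma min_le_log_mul_max {p : ℕ} [Fact p.Prime] {A : Finset (ZMod p)} (hA : 2 ≤ #A) :
    min ((#A : ℝ) ^ ((13 : ℝ) / 12) * (#A / √p) ^ ((1 : ℝ) / 12))
        (#A * (p / #A : ℝ) ^ ((1 : ℝ) / 11)) ≤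
      2 ^ 32 * (1 + Real.log #A) * max (#(A + A) : ℝ) #(A * A) := by
  have : (0 : ℝ) < #A := by
    have : 0 < #A := by omega
    exact_mod_cast this
  have hp : (0 : ℝ) < √p := Real.sqrt_pos.2 (mod_cast (Fact.out : p.Prime).pos)
  have hlog : 0 ≤ Real.log #A := Real.log_natCast_nonneg _
  set M := max (#(A + A) : ℝ) #(A * A)
  have hadd : #(A + A) ≤ M := le_max_left _ _
  have hmul : #(A * A) ≤ M := le_max_right _ _
  have hM : 0 ≤ M := (Nat.cast_nonneg _).trans hadd
  obtain h | h := polynomial_growth hA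
  · refine (min_le_right _ _).trans (le_mul_mul_of_pow_le (j := 8) (k := 11) (by norm_num)
      (by linarith) hM (by norm_num) (by norm_num) ?_)
    calc (#A * (p / #A : ℝ) ^ ((1 : ℝ) / 11)) ^ 11 = p * #A ^ 10 := by
          rw [mul_pow, ← Real.rpow_mul_natCast (by positivity)]
          norm_num
          field_simp
      _ ≤ 2 ^ 32 * (1 + Real.log #A) ^ 8 * (M ^ 4 * M ^ 7) := by
        rw [← mul_assoc]
        exact h.trans (by gcongr)
      _ = _ := by ring
  · refine (min_le_left _ _).trans (le_mul_mul_of_pow_le (j := 8) (k := 12) (by norm_num)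
      (by linarith) hM (by norm_num) (by norm_num) ?_)
    calc ((#A : ℝ) ^ ((13 : ℝ) / 12) * (#A / √p) ^ ((1 : ℝ) / 12)) ^ 12 = #A ^ 14 / √p := by
          rw [mul_pow, ← Real.rpow_mul_natCast (by positivity),
            ← Real.rpow_mul_natCast (by positivity)]
          norm_num
          ring
      _ ≤ 2 ^ 32 * (1 + Real.log #A) ^ 8 * (M ^ 4 * M ^ 8) := by
        rw [div_le_iff₀ hp, ← mul_assoc]
        exact h.trans (by gcongr)
      _ = _ := by ring

theorem sum_product_large_general :
    ∃ c : ℝ, 0 < c ∧ ∀ (p : ℕ), p.Prime → ∀ A : Finset (ZMod p), 2 ≤ #A →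
      c * (Real.log #A)⁻¹ *
        min ((#A : ℝ) ^ ((13 : ℝ) / 12) * (#A / √p) ^ ((1 : ℝ) / 12))
            (#A * (p / #A : ℝ) ^ ((1 : ℝ) / 11)) ≤
        max (#(A + A) : ℝ) #(A * A) := by
  refine ⟨(2 ^ 32 * 3)⁻¹, by norm_num, fun p hp A hA ↦ ?_⟩
  have : Fact p.Prime := ⟨hp⟩
  have hlog : 1 / 2 < Real.log #A := by
    calc (1 / 2 : ℝ) < Real.log 2 := by linarith [Real.log_two_gt_d9]
      _ ≤ Real.log #A := Real.log_le_log two_pos (mod_cast hA)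
  rw [← mul_inv, inv_mul_le_iff₀ (by positivity)]
  calc _ ≤ 2 ^ 32 * (1 + Real.log #A) * max (#(A + A) : ℝ) #(A * A) := min_le_log_mul_max hA
    _ ≤ 2 ^ 32 * 3 * Real.log #A * max (#(A + A) : ℝ) #(A * A) := by
      gcongr ?_ * _
      linarith

theorem sum_product_large :
    ∃ c α : ℝ, 0 < c ∧ 0 ≤ α ∧ ∀ (p : ℕ), p.Prime → ∀ A : Finset (ZMod p),
      2 ≤ A.card → Real.sqrt p ≤ (A.card : ℝ) →
      c * (Real.log (A.card : ℝ)) ^ (-α) *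
        min ((A.card : ℝ) ^ ((13 : ℝ) / 12) * ((A.card : ℝ) / Real.sqrt p) ^ ((1 : ℝ) / 12))
            ((A.card : ℝ) * ((p : ℝ) / (A.card : ℝ)) ^ ((1 : ℝ) / 11)) ≤
        max ((A + A).card : ℝ) ((A * A).card : ℝ) := by
  obtain ⟨c, hc, h⟩ := sum_product_large_general
  exact ⟨c, 1, hc, zero_le_one, fun p hp A hA _ ↦
    by simpa only [Real.rpow_neg_one] using h p hp A hA⟩
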